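/- Let α, β, d ∈ ℤ_{≥0}. Suppose F(x) = P(x) log|(x+1)/(x−1)| + R(x)/((x−1)^α (x+1)^β) with P, R ∈ ℝ[x], deg P ≤ d, and F(x) = O(x^{−d−α−β−1}) as x → ∞. Then F is a real scalar multiple of Q_d^{(α,β)}. -/

import Mathlib

/-!
Write `W = (X-1)^α (X+1)^β` and `L(x) = log|(x+1)/(x-1)|`. Integrating by parts `d` times turns the
integral defining `Q_d^{(α,β)}` into a constant times `∫ h(t)/(z-t) dt` with
`h = D^d[(1-X)^{d+α} (1+X)^{d+β}] = p W`, where `deg p = d` (`integral_by_parts_iterate`,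
`exists_rodrigues`). Any Cauchy transform `∫ H(t)/(z-t) dt` of a polynomial equals
`H(z) (log (z+1) - log (z-1)) - K(z)` with `K` a polynomial (`exists_cauchy_decomp`), so, averaging
the boundary values of the logarithms, `Q_d^{(α,β)}` is itself a constant times `p L - K/W`
(`Qcut_eq`, `QJ_eq`).

Subtract from `F` the multiple of `p L - K/W` that cancels the degree-`d` coefficient of `P`. What
remains has the shape `P₁ L + R₁/W` with `deg P₁ < d` and the same decay. Multiplying by `P₁ W`
leaves an `O(x^{-2})` function which, up to a polynomial, is `∫ P₁² W(t)/(x-t) dt`. That polynomial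
must vanish, and comparing the terms of order `1/x` gives `∫ P₁² W = 0`. As `W` has constant sign
on `(-1,1)`, `P₁ = 0`, and then `R₁ = 0` by decay (`eq_zero_of_decay`).
-/

open Complex Filter MeasureTheory
open scoped Real Topology

noncomputable section

/-- The Jacobi function of the second kind `Q_d^{(α,β)}(z)` on the cut plane `ℂ ∖ [-1,1]`,
defined by the classical integral representation. -/
def Qcut (d α β : ℕ) (z : ℂ) : ℂ :=
  (z - 1) ^ (-(α : ℤ)) * (z + 1) ^ (-(β : ℤ)) / 2 ^ (d + 1) *
    ∫ t in (-1 : ℝ)..1, ((1 : ℂ) - t) ^ (d + α) * ((1 : ℂ) + t) ^ (d + β) / ((z : ℂ) - t) ^ (d + 1)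

/-- The Jacobi function of the second kind at a real argument, extended to `(-1,1)` by the
average `½(Q(x+i0) + Q(x-i0))` of the boundary values. -/
def QJ (d α β : ℕ) (x : ℝ) : ℂ :=
  limUnder (𝓝[>] (0 : ℝ)) fun ε =>
    (Qcut d α β (x + ε * Complex.I) + Qcut d α β (x - ε * Complex.I)) / 2

/-! ### Cauchy transforms of polynomials on `[-1,1]` -/

open Polynomial in
/-- Partial reduction of a Cauchy transform: `∫ H(t)/(z-t) dt` is `H(z)` times the transform of `1`,
up to a polynomial correction `K`, namely `K(z) = ∫ (H(z)-H(t))/(z-t) dt`. The hypothesis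
`z - t ∈ slitPlane` covers both non-real `z` and real `z > 1`. -/
lemma exists_cauchy_decomp (H : ℝ[X]) : ∃ K : ℝ[X], ∀ z : ℂ,
    (∀ t ∈ Set.Icc (-1 : ℝ) 1, z - t ∈ slitPlane) →
    ∫ t in (-1 : ℝ)..1, ((H.eval t : ℝ) : ℂ) / (z - t) =
      aeval z H * (log (z + 1) - log (z - 1)) - aeval z K := by
  have hint : ∀ (Q : ℝ[X]) (z : ℂ), (∀ t ∈ Set.Icc (-1 : ℝ) 1, z - t ∈ slitPlane) →
      IntervalIntegrable (fun t : ℝ => ((Q.eval t : ℝ) : ℂ) / (z - t)) volume (-1) 1 := by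
    intro Q z hz
    apply ContinuousOn.intervalIntegrable
    rw [Set.uIcc_of_le (by norm_num)]
    exact ContinuousOn.div (by fun_prop) (by fun_prop) fun t ht => slitPlane_ne_zero (hz t ht)
  have hmono : ∀ n : ℕ, ∃ K : ℝ[X], ∀ z : ℂ,
      (∀ t ∈ Set.Icc (-1 : ℝ) 1, z - t ∈ slitPlane) →
      ∫ t in (-1 : ℝ)..1, (((X ^ n : ℝ[X]).eval t : ℝ) : ℂ) / (z - t) =
        aeval z (X ^ n : ℝ[X]) * (log (z + 1) - log (z - 1)) - aeval z K := by
    intro n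
    induction n with
    | zero =>
      refine ⟨0, fun z hz => ?_⟩
      have h : ∀ t ∈ Set.uIcc (-1 : ℝ) 1,
          HasDerivAt (fun t : ℝ => -log (z - t)) ((((X ^ 0 : ℝ[X]).eval t : ℝ) : ℂ) / (z - t)) t := by
        intro t ht
        rw [Set.uIcc_of_le (by norm_num)] at ht
        have h1 : HasDerivAt (fun t : ℝ => z - (t : ℂ)) (-1) t := by
          simpa using (ofRealCLM.hasDerivAt (x := t)).const_sub z
        exact (h1.clog_real (hz t ht)).fun_neg.congr_deriv (by simp [neg_div])
      rw [intervalIntegral.integral_eq_sub_of_hasDerivAt h (hint _ z hz)]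
      simp only [pow_zero, map_one, map_zero, ofReal_one, ofReal_neg, sub_neg_eq_add]
      ring
    | succ n ih =>
      obtain ⟨K, hK⟩ := ih
      refine ⟨X * K + C (∫ t in (-1 : ℝ)..1, t ^ n), fun z hz => ?_⟩
      have h1 : ∫ t in (-1 : ℝ)..1, (((X ^ (n + 1) : ℝ[X]).eval t : ℝ) : ℂ) / (z - t) =
          ∫ t in (-1 : ℝ)..1, (z * ((((X ^ n : ℝ[X]).eval t : ℝ) : ℂ) / (z - t))
            - ((t ^ n : ℝ) : ℂ)) := by
        apply intervalIntegral.integral_congr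
        intro t ht
        rw [Set.uIcc_of_le (by norm_num)] at ht
        have := slitPlane_ne_zero (hz t ht)
        simp only [eval_pow, eval_X]
        push_cast
        field_simp
        ring
      rw [h1, intervalIntegral.integral_sub ((hint _ z hz).const_mul z)
        ((by fun_prop : Continuous fun t : ℝ => ((t ^ n : ℝ) : ℂ)).intervalIntegrable _ _),
        intervalIntegral.integral_const_mul, hK z hz, intervalIntegral.integral_ofReal]
      simp only [map_add, map_mul, map_pow, aeval_X, aeval_C, coe_algebraMap]
      ring
  induction H using Polynomial.induction_on' with
  | add p q hp hq =>
    obtain ⟨K, hK⟩ := hp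
    obtain ⟨L, hL⟩ := hq
    refine ⟨K + L, fun z hz => ?_⟩
    have := intervalIntegral.integral_add (hint p z hz) (hint q z hz)
    simp only [eval_add, ofReal_add, add_div, map_add]
    rw [this, hK z hz, hL z hz]
    ring
  | monomial n a =>
    obtain ⟨K, hK⟩ := hmono n
    refine ⟨C a * K, fun z hz => ?_⟩
    rw [← C_mul_X_pow_eq_monomial]
    simp only [eval_mul, eval_C, ofReal_mul, mul_div_assoc, map_mul, aeval_C, coe_algebraMap]
    rw [intervalIntegral.integral_const_mul, hK z hz]
    ring

lemma slit_of_one_lt {x : ℝ} (hx : 1 < x) :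
    ∀ t ∈ Set.Icc (-1 : ℝ) 1, (x : ℂ) - t ∈ slitPlane := by
  intro t ht
  rw [← ofReal_sub, ofReal_mem_slitPlane]
  linarith [ht.2]

lemma log_abs_ratio {x : ℝ} (h1 : x ≠ -1) (h2 : x ≠ 1) :
    Real.log |(x + 1) / (x - 1)| = Real.log |x + 1| - Real.log |x - 1| := by
  rw [abs_div, Real.log_div]
  · simpa using fun h => h1 (by linarith)
  · simpa using fun h => h2 (by linarith)

open Polynomial in
/-- The Cauchy decomposition at a real point right of the cut, with real integrals. -/
lemma cauchy_decomp_real {H K : ℝ[X]} (hK : ∀ z : ℂ,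
    (∀ t ∈ Set.Icc (-1 : ℝ) 1, z - t ∈ slitPlane) →
    ∫ t in (-1 : ℝ)..1, ((H.eval t : ℝ) : ℂ) / (z - t) =
      aeval z H * (log (z + 1) - log (z - 1)) - aeval z K) {x : ℝ} (hx : 1 < x) :
    ∫ t in (-1 : ℝ)..1, H.eval t / (x - t) =
      H.eval x * Real.log |(x + 1) / (x - 1)| - K.eval x := by
  have h := hK x (slit_of_one_lt hx)
  have h3 : ∀ Q : ℝ[X], aeval (x : ℂ) Q = ((Q.eval x : ℝ) : ℂ) := by
    intro Q
    simpa using aeval_algebraMap_apply ℂ x Q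
  have h4 : log ((x : ℂ) + 1) = ((Real.log |x + 1| : ℝ) : ℂ) := by
    rw [abs_of_pos (by linarith), ofReal_log (by linarith)]
    push_cast; rfl
  have h5 : log ((x : ℂ) - 1) = ((Real.log |x - 1| : ℝ) : ℂ) := by
    rw [abs_of_pos (by linarith), ofReal_log (by linarith)]
    push_cast; rfl
  rw [h3, h3, h4, h5] at h
  rw [log_abs_ratio (by linarith) (by linarith)]
  have h6 : ∫ t in (-1 : ℝ)..1, ((H.eval t : ℝ) : ℂ) / (x - t) =
      ((∫ t in (-1 : ℝ)..1, H.eval t / (x - t) : ℝ) : ℂ) := by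
    rw [← intervalIntegral.integral_ofReal]
    push_cast
    rfl
  rw [h6] at h
  exact_mod_cast h

/-! ### Integration by parts and decay of Cauchy transforms -/

open Polynomial in
/-- Repeated integration by parts; the boundary terms vanish because `G` has zeros of order
at least `d` at both endpoints. -/
lemma integral_by_parts_iterate (d : ℕ) : ∀ (G : ℝ[X]), (X ^ 2 - 1) ^ d ∣ G → ∀ z : ℂ,
    (∀ t ∈ Set.Icc (-1 : ℝ) 1, z - t ∈ slitPlane) →
    ∫ t in (-1 : ℝ)..1, ((G.eval t : ℝ) : ℂ) / (z - t) ^ (d + 1) =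
      (-1) ^ d / (d.factorial : ℂ) *
        ∫ t in (-1 : ℝ)..1, (((derivative^[d] G).eval t : ℝ) : ℂ) / (z - t) := by
  induction d with
  | zero => intro G _ z _; simp
  | succ d ih =>
    intro G hG z hz
    have hG' : (X ^ 2 - 1) ^ d ∣ derivative G := by
      simpa using pow_sub_one_dvd_derivative_of_pow_dvd hG
    have hb : G.eval 1 = 0 ∧ G.eval (-1) = 0 := by
      obtain ⟨q, rfl⟩ := hG
      simp
    have hne : ∀ t ∈ Set.uIcc (-1 : ℝ) 1, z - t ≠ 0 := fun t ht => by
      rw [Set.uIcc_of_le (by norm_num)] at ht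
      exact slitPlane_ne_zero (hz t ht)
    have hu : ∀ t ∈ Set.uIcc (-1 : ℝ) 1, HasDerivAt (fun t : ℝ => ((G.eval t : ℝ) : ℂ))
        (((derivative G).eval t : ℝ) : ℂ) t := fun t _ => (G.hasDerivAt t).ofReal_comp
    have hv : ∀ t ∈ Set.uIcc (-1 : ℝ) 1,
        HasDerivAt (fun t : ℝ => 1 / ((d + 1 : ℂ) * (z - t) ^ (d + 1)))
          (1 / (z - t) ^ (d + 1 + 1)) t := by
      intro t ht
      have h0 := hne t ht
      have hd : (d + 1 : ℂ) ≠ 0 := by exact_mod_cast d.succ_ne_zero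
      have h1 : HasDerivAt (fun t : ℝ => z - (t : ℂ)) (-1) t := by
        simpa using (ofRealCLM.hasDerivAt (x := t)).const_sub z
      have h2 := ((h1.fun_pow (d + 1)).const_mul (d + 1 : ℂ)).fun_inv
        (mul_ne_zero hd (pow_ne_zero _ h0))
      simp only [one_div]
      refine h2.congr_deriv ?_
      push_cast
      field_simp
      ring
    have hc : ∀ m : ℕ, ContinuousOn (fun t : ℝ => 1 / (z - t) ^ m) (Set.uIcc (-1 : ℝ) 1) :=
      fun m => ContinuousOn.div (by fun_prop) (by fun_prop) fun t ht => pow_ne_zero _ (hne t ht)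
    have key := intervalIntegral.integral_mul_deriv_eq_deriv_mul hu hv
      ((by fun_prop : Continuous fun t : ℝ =>
        (((derivative G).eval t : ℝ) : ℂ)).intervalIntegrable _ _) (hc _).intervalIntegrable
    simp only [hb.1, hb.2, ofReal_zero, zero_mul, sub_zero, zero_sub] at key
    have e1 : ∫ t in (-1 : ℝ)..1, ((G.eval t : ℝ) : ℂ) / (z - t) ^ (d + 1 + 1) =
        ∫ t in (-1 : ℝ)..1, ((G.eval t : ℝ) : ℂ) * (1 / (z - t) ^ (d + 1 + 1)) := by
      simp only [mul_one_div]
    have e2 : ∫ t in (-1 : ℝ)..1, (((derivative G).eval t : ℝ) : ℂ) *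
          (1 / ((d + 1 : ℂ) * (z - t) ^ (d + 1))) =
        1 / (d + 1 : ℂ) *
          ∫ t in (-1 : ℝ)..1, (((derivative G).eval t : ℝ) : ℂ) / (z - t) ^ (d + 1) := by
      rw [← intervalIntegral.integral_const_mul]
      congr 1
      ext t
      rw [one_div, mul_inv]
      ring
    rw [e1, key, e2, ih _ hG' z hz, Function.iterate_succ_apply, Nat.factorial_succ]
    push_cast
    have hd : (d + 1 : ℂ) ≠ 0 := by exact_mod_cast d.succ_ne_zero
    have hf : (d.factorial : ℂ) ≠ 0 := by exact_mod_cast d.factorial_ne_zero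
    field_simp
    ring

lemma cauchy_isBigO {g : ℝ → ℝ} (hg : Continuous g) (m : ℕ) :
    (fun x : ℝ => ∫ t in (-1 : ℝ)..1, g t / (x - t) ^ m) =O[atTop]
      fun x : ℝ => (x ^ m)⁻¹ := by
  obtain ⟨M, hM⟩ := (isCompact_Icc (a := (-1 : ℝ)) (b := 1)).exists_bound_of_continuousOn
    hg.continuousOn
  have hM0 : 0 ≤ M := (norm_nonneg _).trans (hM 0 (by simp))
  refine Asymptotics.IsBigO.of_bound (2 ^ m * M * 2) ?_
  filter_upwards [eventually_ge_atTop (2 : ℝ)] with x hx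
  have h := intervalIntegral.norm_integral_le_of_norm_le_const (a := (-1 : ℝ)) (b := 1)
    (f := fun t => g t / (x - t) ^ m) (C := 2 ^ m * M * (x ^ m)⁻¹) (by
      intro t ht
      rw [Set.uIoc_of_le (by norm_num)] at ht
      have hxt : x / 2 ≤ x - t := by linarith [ht.2]
      have hp : (x / 2) ^ m ≤ (x - t) ^ m := pow_le_pow_left₀ (by linarith) hxt m
      have hp0 : 0 < (x / 2) ^ m := by positivity
      rw [norm_div, Real.norm_of_nonneg (hp0.le.trans hp)]
      calc ‖g t‖ / (x - t) ^ m ≤ M / (x / 2) ^ m :=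
            div_le_div₀ hM0 (hM t ⟨ht.1.le, ht.2⟩) hp0 hp
        _ = _ := by rw [div_pow]; field_simp)
  rw [Real.norm_of_nonneg (by positivity : 0 ≤ (x ^ m)⁻¹)]
  calc _ ≤ _ := h
    _ = _ := by norm_num; ring

/-! ### Uniqueness from decay -/

open Polynomial in
lemma eq_zero_of_tendsto_zero {R : ℝ[X]} (h : Tendsto (fun x => R.eval x) atTop (𝓝 0)) :
    R = 0 :=
  leadingCoeff_eq_zero.mp (R.tendsto_nhds_iff.mp h).1

open Polynomial in
/-- Uniqueness: multiplying by `P` turns the decay into `∫ P² W = 0`, where `W` has constant sign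
on `(-1,1)`; hence `P = 0`, and then the polynomial `R` tends to `0`. -/
lemma eq_zero_of_decay (d α β : ℕ) (P R : ℝ[X]) (hP : P.degree < d)
    (hO : (fun x : ℝ => (P * ((X - 1) ^ α * (X + 1) ^ β)).eval x *
        Real.log |(x + 1) / (x - 1)| + R.eval x) =O[atTop] fun x : ℝ => (x ^ (d + 1))⁻¹) :
    P = 0 ∧ R = 0 := by
  have hinv : Tendsto (fun x : ℝ => (x ^ (d + 1))⁻¹) atTop (𝓝 0) :=
    (tendsto_pow_atTop d.succ_ne_zero).inv_tendsto_atTop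
  have hP0 : P = 0 := by
    by_contra hne
    set H : ℝ[X] := P ^ 2 * ((X - 1) ^ α * (X + 1) ^ β) with hH
    obtain ⟨K, hK⟩ := exists_cauchy_decomp H
    set J : ℝ → ℝ := fun x => ∫ t in (-1 : ℝ)..1, H.eval t / (x - t) with hJ
    have hJO : J =O[atTop] fun x : ℝ => x⁻¹ := by
      simpa using cauchy_isBigO (g := fun t => H.eval t) (by fun_prop) 1
    have hJ0 : Tendsto J atTop (𝓝 0) := hJO.trans_tendsto tendsto_inv_atTop_zero
    have hPO : (fun x => P.eval x) =O[atTop] fun x : ℝ => x ^ (d - 1) := by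
      have hdeg : P.degree ≤ (X ^ (d - 1) : ℝ[X]).degree := by
        rw [degree_X_pow, ← natDegree_le_iff_degree_le]
        have := (natDegree_lt_iff_degree_lt hne).mpr hP
        omega
      simpa using isBigO_atTop_of_degree_le _ _ hdeg
    have hd : 0 < d := by
      have := (natDegree_lt_iff_degree_lt hne).mpr hP
      omega
    have hsum : (fun x => x * (J x + (K + P * R).eval x)) =O[atTop] fun x : ℝ => x⁻¹ := by
      refine (((Asymptotics.isBigO_refl (fun x : ℝ => x) atTop).mul
        (hPO.mul hO)).congr' ?_ ?_)
      · filter_upwards [eventually_gt_atTop 1] with x hx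
        rw [hJ]
        simp only
        rw [cauchy_decomp_real hK hx, hH]
        simp only [eval_mul, eval_pow, eval_add]
        ring
      · filter_upwards [eventually_gt_atTop 1] with x hx
        obtain ⟨e, rfl⟩ : ∃ e, d = e + 1 := ⟨d - 1, by omega⟩
        have : x ≠ 0 := by linarith
        simp only [Nat.add_sub_cancel]
        field_simp
        ring
    have hsum0 : Tendsto (fun x => x * (J x + (K + P * R).eval x)) atTop (𝓝 0) :=
      hsum.trans_tendsto tendsto_inv_atTop_zero
    have hT : K + P * R = 0 := by
      apply eq_zero_of_tendsto_zero
      have h1 := (tendsto_inv_atTop_zero (𝕜 := ℝ)).mul hsum0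
      have h2 := h1.sub hJ0
      simp only [mul_zero, sub_zero] at h2
      refine h2.congr' ?_
      filter_upwards [eventually_gt_atTop 1] with x hx
      have : x ≠ 0 := by linarith
      field_simp
      ring
    simp only [hT, eval_zero, add_zero] at hsum0
    have hsign : ∀ t, (-1) ^ α * H.eval t = (P.eval t) ^ 2 * ((1 - t) ^ α * (1 + t) ^ β) := by
      intro t
      have : (1 - t) ^ α = (-1) ^ α * (t - 1) ^ α := by rw [← mul_pow]; ring
      rw [hH, this]
      simp only [eval_mul, eval_pow, eval_add, eval_sub, eval_X, eval_one]
      ring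
    have hnonneg : ∀ t ∈ Set.Icc (-1 : ℝ) 1, 0 ≤ (-1) ^ α * H.eval t := by
      intro t ht
      rw [hsign]
      have h1 : 0 ≤ 1 - t := by linarith [ht.2]
      have h2 : 0 ≤ 1 + t := by linarith [ht.1]
      positivity
    have hpos : 0 < ∫ t in (-1 : ℝ)..1, (-1) ^ α * H.eval t := by
      apply intervalIntegral.integral_pos (by norm_num) (by fun_prop)
        (fun t ht => hnonneg t ⟨ht.1.le, ht.2⟩)
      obtain ⟨c, hc, hc0⟩ : ∃ c ∈ Set.Ioo (-1 : ℝ) 1, P.eval c ≠ 0 := by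
        by_contra! hall
        exact hne (eq_zero_of_infinite_isRoot P
          ((Set.Ioo_infinite (by norm_num : (-1 : ℝ) < 1)).mono hall))
      refine ⟨c, ⟨hc.1.le, hc.2.le⟩, ?_⟩
      rw [hsign]
      have h1 : 0 < 1 - c := by linarith [hc.2]
      have h2 : 0 < 1 + c := by linarith [hc.1]
      positivity
    set I := ∫ t in (-1 : ℝ)..1, (-1) ^ α * H.eval t with hI
    -- For `x ≥ 1` and `t ∈ [-1,1]` one has `x/(x-t) ≥ x/(x+1) ≥ 1/2`.
    have hlow : ∀ᶠ x in atTop, I / 2 ≤ (-1) ^ α * (x * J x) := by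
      filter_upwards [eventually_gt_atTop 1] with x hx
      have e : (-1) ^ α * (x * J x) =
          ∫ t in (-1 : ℝ)..1, (-1) ^ α * H.eval t * (x / (x - t)) := by
        rw [hJ, ← intervalIntegral.integral_const_mul, ← intervalIntegral.integral_const_mul]
        congr 1
        ext t
        ring
      rw [e, hI, ← intervalIntegral.integral_div]
      apply intervalIntegral.integral_mono_on (by norm_num)
      · exact (by fun_prop : Continuous fun t : ℝ =>
          (-1) ^ α * H.eval t / 2).intervalIntegrable _ _
      · apply ContinuousOn.intervalIntegrable
        rw [Set.uIcc_of_le (by norm_num)]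
        refine ContinuousOn.mul (by fun_prop) (ContinuousOn.div (by fun_prop) (by fun_prop) ?_)
        intro t ht
        have := ht.2
        linarith
      · intro t ht
        rw [div_eq_mul_one_div]
        apply mul_le_mul_of_nonneg_left _ (hnonneg t ht)
        rw [div_le_div_iff₀ (by norm_num) (by linarith [ht.2])]
        linarith [ht.1]
    have := ge_of_tendsto (hsum0.const_mul ((-1) ^ α)) hlow
    simp only [mul_zero] at this
    linarith
  refine ⟨hP0, eq_zero_of_tendsto_zero ?_⟩
  subst hP0
  simpa using hO.trans_tendsto hinv

/-! ### Boundary values of the logarithm -/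

/-- The boundary values of the logarithm from above and below the real axis are conjugate. -/
lemma exists_log_boundary {y : ℝ} (hy : y ≠ 0) : ∃ θ : ℂ,
    Tendsto (fun ε : ℝ => log (y + ε * I)) (𝓝[>] 0) (𝓝 (Real.log |y| + θ)) ∧
    Tendsto (fun ε : ℝ => log (y - ε * I)) (𝓝[>] 0) (𝓝 (Real.log |y| - θ)) := by
  have hp : Tendsto (fun ε : ℝ => (y + ε * I : ℂ)) (𝓝[>] 0) (𝓝 (y : ℂ)) := by
    have : Continuous fun ε : ℝ => (y + ε * I : ℂ) := by fun_prop
    simpa using (this.tendsto 0).mono_left nhdsWithin_le_nhds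
  have hm : Tendsto (fun ε : ℝ => (y - ε * I : ℂ)) (𝓝[>] 0) (𝓝 (y : ℂ)) := by
    have : Continuous fun ε : ℝ => (y - ε * I : ℂ) := by fun_prop
    simpa using (this.tendsto 0).mono_left nhdsWithin_le_nhds
  rcases lt_or_gt_of_ne hy with h | h
  · refine ⟨π * I, ?_, ?_⟩
    · have := tendsto_log_nhdsWithin_im_nonneg_of_re_neg_of_im_zero (z := (y : ℂ))
        (by simpa) (by simp)
      rw [norm_real, Real.norm_eq_abs] at this
      refine this.comp (tendsto_nhdsWithin_iff.mpr ⟨hp, ?_⟩)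
      filter_upwards [self_mem_nhdsWithin] with ε hε
      simpa using (le_of_lt hε)
    · have := tendsto_log_nhdsWithin_im_neg_of_re_neg_of_im_zero (z := (y : ℂ))
        (by simpa) (by simp)
      rw [norm_real, Real.norm_eq_abs] at this
      refine this.comp (tendsto_nhdsWithin_iff.mpr ⟨hm, ?_⟩)
      filter_upwards [self_mem_nhdsWithin] with ε hε
      simpa using hε
  · refine ⟨0, ?_⟩
    have hc : ContinuousAt log (y : ℂ) := continuousAt_clog (by simpa using h)
    have e : log (y : ℂ) = ((Real.log |y| : ℝ) : ℂ) := by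
      rw [abs_of_pos h, ofReal_log h.le]
    have hc' : Tendsto log (𝓝 (y : ℂ)) (𝓝 (Real.log |y| : ℝ)) := e ▸ hc
    simpa [Function.comp_def] using And.intro (hc'.comp hp) (hc'.comp hm)

/-! ### Closed form of the Jacobi function of the second kind -/

open Polynomial in
/-- The Rodrigues formula: `D^d[(1-X)^{d+α}(1+X)^{d+β}]` is the Jacobi weight times a polynomial of
degree exactly `d`. -/
lemma exists_rodrigues (d α β : ℕ) : ∃ p : ℝ[X], p.natDegree = d ∧ p ≠ 0 ∧
    derivative^[d] ((1 - X) ^ (d + α) * (1 + X) ^ (d + β) : ℝ[X]) =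
      p * ((X - 1) ^ α * (X + 1) ^ β) := by
  set G : ℝ[X] := (1 - X) ^ (d + α) * (1 + X) ^ (d + β) with hG
  have hG' : G = (-1) ^ (d + α) * ((X - 1) ^ (d + α) * (X + 1) ^ (d + β)) := by
    rw [hG, ← neg_sub (X : ℝ[X]) 1, neg_pow, add_comm 1 X]
    ring
  have h1 : (X - 1 : ℝ[X]) ^ α ∣ derivative^[d] G := by
    have : (X - 1 : ℝ[X]) ^ (d + α) ∣ G := by
      rw [hG']
      exact (dvd_mul_right _ _).mul_left _
    simpa using pow_sub_dvd_iterate_derivative_of_pow_dvd d this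
  have h2 : (X + 1 : ℝ[X]) ^ β ∣ derivative^[d] G := by
    have : (X + 1 : ℝ[X]) ^ (d + β) ∣ G := by
      rw [hG']
      exact (dvd_mul_left _ _).mul_left _
    simpa using pow_sub_dvd_iterate_derivative_of_pow_dvd d this
  have hcop : IsCoprime ((X - 1 : ℝ[X]) ^ α) ((X + 1) ^ β) := by
    apply IsCoprime.pow
    have := isCoprime_X_sub_C_of_isUnit_sub (R := ℝ) (a := 1) (b := -1)
      (by norm_num)
    simpa using this
  obtain ⟨p, hp⟩ := hcop.mul_dvd h1 h2
  have hm1 : (X - 1 : ℝ[X]).Monic := by simpa using monic_X_sub_C (1 : ℝ)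
  have hm2 : (X + 1 : ℝ[X]).Monic := by simpa using monic_X_add_C (1 : ℝ)
  have hd1 : (X - 1 : ℝ[X]).natDegree = 1 := by simpa using natDegree_X_sub_C (1 : ℝ)
  have hd2 : (X + 1 : ℝ[X]).natDegree = 1 := by simpa using natDegree_X_add_C (1 : ℝ)
  have hdeg : ∀ a b : ℕ, ((X - 1 : ℝ[X]) ^ a * (X + 1) ^ b).natDegree = a + b := by
    intro a b
    rw [(hm1.pow a).natDegree_mul (hm2.pow b), hm1.natDegree_pow, hm2.natDegree_pow, hd1, hd2]
    simp
  have hGC : G = C ((-1) ^ (d + α)) * ((X - 1) ^ (d + α) * (X + 1) ^ (d + β)) := by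
    rw [hG']
    simp
  have hGdeg : G.natDegree = d + α + β + d := by
    rw [hGC, natDegree_C_mul (by simp), hdeg]
    ring
  have hG0 : G ≠ 0 := by
    rw [hGC]
    exact mul_ne_zero (by simp) ((hm1.pow _).mul (hm2.pow _)).ne_zero
  have hcoeff : (derivative^[d] G).coeff (d + α + β) ≠ 0 := by
    rw [coeff_iterate_derivative, ← hGdeg, coeff_natDegree, nsmul_eq_mul]
    refine mul_ne_zero ?_ (leadingCoeff_ne_zero.mpr hG0)
    rw [Nat.cast_ne_zero, hGdeg]
    exact (Nat.descFactorial_pos.mpr (by omega)).ne'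
  have hhdeg : (derivative^[d] G).natDegree = d + α + β := by
    refine le_antisymm ((natDegree_iterate_derivative G d).trans (by omega)) ?_
    exact le_natDegree_of_ne_zero hcoeff
  have hp0 : p ≠ 0 := by
    rintro rfl
    rw [hp] at hcoeff
    simp at hcoeff
  refine ⟨p, ?_, hp0, by rw [hp, mul_comm]⟩
  have := hhdeg
  rw [hp, ((hm1.pow α).mul (hm2.pow β)).natDegree_mul' hp0, hdeg] at this
  omega

/-- The constant produced by the `d`-fold integration by parts, including the factor `2^{-(d+1)}`
of the definition of `Qcut`. -/
def rodriguesConst (d : ℕ) : ℝ := (-1) ^ d / (d.factorial : ℝ) / 2 ^ (d + 1)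

open Polynomial in
/-- `(X^2-1)^d` divides the integrand numerator, so the boundary terms of `integral_by_parts_iterate`
vanish for it. -/
lemma sq_sub_one_pow_dvd (d α β : ℕ) :
    (X ^ 2 - 1) ^ d ∣ ((1 - X) ^ (d + α) * (1 + X) ^ (d + β) : ℝ[X]) := by
  refine ⟨(-1) ^ d * ((1 - X) ^ α * (1 + X) ^ β), ?_⟩
  have : (X ^ 2 - 1 : ℝ[X]) = (-1) * ((1 - X) * (1 + X)) := by ring
  rw [this, mul_pow, mul_pow, pow_add, pow_add]
  have h : ((-1 : ℝ[X]) ^ d) * (-1) ^ d = 1 := by rw [← mul_pow]; simp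
  linear_combination (-(1 - X : ℝ[X]) ^ d * (1 - X) ^ α * (1 + X) ^ d * (1 + X) ^ β) * h

open Polynomial in
/-- Closed form of `Qcut` off the cut, for a Rodrigues factor `p` and a polynomial `K` correcting
the Cauchy transform of `p` times the weight. -/
lemma Qcut_eq (d α β : ℕ) {p K : ℝ[X]}
    (hp : derivative^[d] ((1 - X) ^ (d + α) * (1 + X) ^ (d + β) : ℝ[X]) =
      p * ((X - 1) ^ α * (X + 1) ^ β))
    (hK : ∀ z : ℂ, (∀ t ∈ Set.Icc (-1 : ℝ) 1, z - t ∈ slitPlane) →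
      ∫ t in (-1 : ℝ)..1, (((p * ((X - 1) ^ α * (X + 1) ^ β)).eval t : ℝ) : ℂ) / (z - t) =
        aeval z (p * ((X - 1) ^ α * (X + 1) ^ β)) * (log (z + 1) - log (z - 1)) - aeval z K)
    {z : ℂ} (hz : ∀ t ∈ Set.Icc (-1 : ℝ) 1, z - t ∈ slitPlane) :
    Qcut d α β z = rodriguesConst d * (aeval z p * (log (z + 1) - log (z - 1)) -
      aeval z K / ((z - 1) ^ α * (z + 1) ^ β)) := by
  have h := integral_by_parts_iterate d _ (sq_sub_one_pow_dvd d α β) z hz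
  rw [hp, hK z hz] at h
  have e : ∀ t : ℝ, (((1 - X) ^ (d + α) * (1 + X) ^ (d + β) : ℝ[X]).eval t : ℝ) =
      ((1 : ℂ) - t) ^ (d + α) * ((1 : ℂ) + t) ^ (d + β) := by
    intro t
    simp
  simp only [e] at h
  have h1 : z - 1 ≠ 0 := by simpa using slitPlane_ne_zero (hz 1 (by simp))
  have h2 : z + 1 ≠ 0 := by simpa using slitPlane_ne_zero (hz (-1) (by simp))
  rw [Qcut, h, rodriguesConst]
  simp only [map_mul, map_pow, map_sub, map_add, aeval_X, map_one, zpow_neg, zpow_natCast]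
  push_cast
  have h3 := pow_ne_zero α h1
  have h4 := pow_ne_zero β h2
  field_simp

open Polynomial in
/-- The closed form passes to the boundary: the arguments of the logarithms cancel in the average
of the values from above and below, also for `x` in `(-1,1)`. -/
lemma QJ_eq (d α β : ℕ) {p K : ℝ[X]}
    (hQ : ∀ z : ℂ, (∀ t ∈ Set.Icc (-1 : ℝ) 1, z - t ∈ slitPlane) →
      Qcut d α β z = rodriguesConst d * (aeval z p * (log (z + 1) - log (z - 1)) -
        aeval z K / ((z - 1) ^ α * (z + 1) ^ β)))
    {x : ℝ} (h1 : x ≠ -1) (h2 : x ≠ 1) :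
    QJ d α β x = ((rodriguesConst d * (p.eval x * Real.log |(x + 1) / (x - 1)| -
      K.eval x / ((x - 1) ^ α * (x + 1) ^ β)) : ℝ) : ℂ) := by
  have h1' : x + 1 ≠ 0 := fun h => h1 (by linarith)
  have h2' : x - 1 ≠ 0 := fun h => h2 (by linarith)
  have h1c : (x : ℂ) + 1 ≠ 0 := by exact_mod_cast h1'
  have h2c : (x : ℂ) - 1 ≠ 0 := by exact_mod_cast h2'
  obtain ⟨θ, hθp, hθm⟩ := exists_log_boundary h1'
  obtain ⟨η, hηp, hηm⟩ := exists_log_boundary h2'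
  have hev : ∀ Q : ℝ[X], aeval (x : ℂ) Q = ((Q.eval x : ℝ) : ℂ) := by
    intro Q
    simpa using aeval_algebraMap_apply ℂ x Q
  -- The limit of `Qcut` along any approach to `x` along which the two logarithms converge.
  have hlim : ∀ (u : ℝ → ℂ) (a b : ℂ), Tendsto u (𝓝[>] 0) (𝓝 (x : ℂ)) →
      (∀ᶠ ε in 𝓝[>] (0 : ℝ), (u ε).im ≠ 0) →
      Tendsto (fun ε => log (u ε + 1)) (𝓝[>] 0) (𝓝 a) →
      Tendsto (fun ε => log (u ε - 1)) (𝓝[>] 0) (𝓝 b) →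
      Tendsto (fun ε => Qcut d α β (u ε)) (𝓝[>] 0)
        (𝓝 (rodriguesConst d * (aeval (x : ℂ) p * (a - b) -
          aeval (x : ℂ) K / (((x : ℂ) - 1) ^ α * ((x : ℂ) + 1) ^ β)))) := by
    intro u a b hu him ha hb
    have hcont : ∀ Q : ℝ[X], Tendsto (fun ε => aeval (u ε) Q) (𝓝[>] 0) (𝓝 (aeval (x : ℂ) Q)) :=
      fun Q => (Q.continuous_aeval.tendsto _).comp hu
    have key := (((hcont p).mul (ha.sub hb)).sub ((hcont K).div
      (((hu.sub_const 1).pow α).mul ((hu.add_const 1).pow β))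
      (mul_ne_zero (pow_ne_zero _ h2c) (pow_ne_zero _ h1c)))).const_mul
      ((rodriguesConst d : ℝ) : ℂ)
    refine key.congr' ?_
    filter_upwards [him] with ε hε
    rw [hQ]
    · rfl
    · intro t _
      rw [mem_slitPlane_iff]
      right
      simpa using hε
  have hp : Tendsto (fun ε : ℝ => (x + ε * I : ℂ)) (𝓝[>] 0) (𝓝 (x : ℂ)) := by
    have : Continuous fun ε : ℝ => (x + ε * I : ℂ) := by fun_prop
    simpa using (this.tendsto 0).mono_left nhdsWithin_le_nhds
  have hm : Tendsto (fun ε : ℝ => (x - ε * I : ℂ)) (𝓝[>] 0) (𝓝 (x : ℂ)) := by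
    have : Continuous fun ε : ℝ => (x - ε * I : ℂ) := by fun_prop
    simpa using (this.tendsto 0).mono_left nhdsWithin_le_nhds
  have hne : ∀ᶠ ε in 𝓝[>] (0 : ℝ), ε ≠ 0 := by
    filter_upwards [self_mem_nhdsWithin] with ε hε
    exact ne_of_gt hε
  have Lp := hlim _ _ _ hp (hne.mono fun ε hε => by simpa using hε)
    (hθp.congr fun ε => by push_cast; ring_nf) (hηp.congr fun ε => by push_cast; ring_nf)
  have Lm := hlim _ _ _ hm (hne.mono fun ε hε => by simpa using hε)
    (hθm.congr fun ε => by push_cast; ring_nf) (hηm.congr fun ε => by push_cast; ring_nf)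
  rw [QJ, ((Lp.add Lm).div_const 2).limUnder_eq, log_abs_ratio h1 h2, hev, hev]
  push_cast
  ring

/-! ### The characterization -/

/-- **Proposition 4**, second part (characterization): any function of the shape
`P(x)·log|(x+1)/(x-1)| + R(x)/((x-1)^α (x+1)^β)` with `deg P ≤ d` which decays like
`x^{-d-α-β-1}` at infinity must be a (real) scalar multiple of `Q_d^{(α,β)}`. -/
theorem jacobiQ_characterization (d α β : ℕ) (P R : Polynomial ℝ) (hP : P.natDegree ≤ d)
    (F : ℝ → ℝ)
    (hF : ∀ x : ℝ, x ≠ -1 → x ≠ 1 →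
      F x = P.eval x * Real.log |(x + 1) / (x - 1)| + R.eval x / ((x - 1) ^ α * (x + 1) ^ β))
    (hO : F =O[atTop] fun x : ℝ => x ^ (-((d : ℤ) + α + β + 1))) :
    ∃ C : ℝ, ∀ x : ℝ, x ≠ -1 → x ≠ 1 → (F x : ℂ) = (C : ℂ) * QJ d α β x := by
  obtain ⟨p, hpd, hp0, hp⟩ := exists_rodrigues d α β
  obtain ⟨K, hK⟩ := exists_cauchy_decomp
    (p * ((Polynomial.X - 1) ^ α * (Polynomial.X + 1) ^ β))
  have hpc : p.coeff d ≠ 0 := by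
    have := Polynomial.leadingCoeff_ne_zero.mpr hp0
    rwa [Polynomial.leadingCoeff, hpd] at this
  have hκ : rodriguesConst d ≠ 0 := by
    have : (d.factorial : ℝ) ≠ 0 := by exact_mod_cast d.factorial_ne_zero
    unfold rodriguesConst
    positivity
  -- The multiple of `p` with the same coefficient of degree `d` as `P`.
  set c : ℝ := P.coeff d / p.coeff d with hc
  have hdeg : (P - Polynomial.C c * p).degree < d := by
    rw [Polynomial.degree_lt_iff_coeff_zero]
    intro m hm
    rw [Polynomial.coeff_sub, Polynomial.coeff_C_mul]
    rcases hm.eq_or_lt with rfl | hlt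
    · rw [hc]; field_simp; ring
    · rw [Polynomial.coeff_eq_zero_of_natDegree_lt (hP.trans_lt hlt),
        Polynomial.coeff_eq_zero_of_natDegree_lt (hpd.trans_lt hlt)]
      ring
  have hFO : (fun x : ℝ => ((x - 1) ^ α * (x + 1) ^ β) * F x) =O[atTop]
      fun x : ℝ => (x ^ (d + 1))⁻¹ := by
    have b1 : (fun x : ℝ => x - 1) =O[atTop] fun x : ℝ => x :=
      (Asymptotics.isBigO_refl _ _).sub (Asymptotics.isLittleO_const_id_atTop (1 : ℝ)).isBigO
    have b2 : (fun x : ℝ => x + 1) =O[atTop] fun x : ℝ => x :=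
      (Asymptotics.isBigO_refl _ _).add (Asymptotics.isLittleO_const_id_atTop (1 : ℝ)).isBigO
    refine (((b1.pow α).mul (b2.pow β)).mul hO).congr' EventuallyEq.rfl ?_
    filter_upwards [eventually_gt_atTop 0] with x hx
    have e : (-((d : ℤ) + α + β + 1)) = -((d + 1 + α + β : ℕ) : ℤ) := by push_cast; ring
    rw [e, zpow_neg, zpow_natCast]
    field_simp
    ring
  have hQO : (fun x : ℝ => (p * ((Polynomial.X - 1) ^ α * (Polynomial.X + 1) ^ β)).eval x *
      Real.log |(x + 1) / (x - 1)| - K.eval x) =O[atTop] fun x : ℝ => (x ^ (d + 1))⁻¹ := by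
    set G : Polynomial ℝ := (1 - Polynomial.X) ^ (d + α) * (1 + Polynomial.X) ^ (d + β) with hG
    refine ((cauchy_isBigO (g := fun t => G.eval t) (by fun_prop) (d + 1)).const_mul_left
      ((-1) ^ d * (d.factorial : ℝ))).congr' ?_ EventuallyEq.rfl
    filter_upwards [eventually_gt_atTop 1] with x hx
    rw [← cauchy_decomp_real hK hx, ← hp]
    have h := integral_by_parts_iterate d G (sq_sub_one_pow_dvd d α β) x (slit_of_one_lt hx)
    have e1 : ∀ (Q : Polynomial ℝ) (m : ℕ),
        ∫ t in (-1 : ℝ)..1, ((Q.eval t : ℝ) : ℂ) / ((x : ℂ) - t) ^ m =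
        ((∫ t in (-1 : ℝ)..1, Q.eval t / (x - t) ^ m : ℝ) : ℂ) := by
      intro Q m
      rw [← intervalIntegral.integral_ofReal]
      push_cast
      rfl
    have e2 := e1 ((⇑Polynomial.derivative)^[d] G) 1
    simp only [pow_one] at e2
    rw [e1, e2] at h
    have h' : ∫ t in (-1 : ℝ)..1, G.eval t / (x - t) ^ (d + 1) = (-1) ^ d / (d.factorial : ℝ) *
        ∫ t in (-1 : ℝ)..1, ((⇑Polynomial.derivative)^[d] G).eval t / (x - t) := by
      exact_mod_cast h
    have hs : ((-1 : ℝ) ^ d) * (-1) ^ d = 1 := by rw [← mul_pow]; simp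
    have hf : (d.factorial : ℝ) ≠ 0 := by exact_mod_cast d.factorial_ne_zero
    rw [h']
    field_simp
    rw [sq, hs, one_mul]
  obtain ⟨hPp, hRK⟩ := eq_zero_of_decay d α β (P - Polynomial.C c * p) (R + Polynomial.C c * K)
    hdeg (by
      refine (hFO.sub (hQO.const_mul_left c)).congr' ?_ EventuallyEq.rfl
      filter_upwards [eventually_gt_atTop 1] with x hx
      have h1 : x - 1 ≠ 0 := by linarith
      have h2 : x + 1 ≠ 0 := by linarith
      rw [hF x (by linarith) (by linarith)]
      simp only [Polynomial.eval_mul, Polynomial.eval_pow, Polynomial.eval_add,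
        Polynomial.eval_sub, Polynomial.eval_X, Polynomial.eval_one, Polynomial.eval_C]
      field_simp
      ring)
  refine ⟨c / rodriguesConst d, fun x h1 h2 => ?_⟩
  rw [QJ_eq d α β (fun z hz => Qcut_eq d α β hp hK hz) h1 h2, hF x h1 h2]
  rw [sub_eq_zero.mp hPp, eq_neg_of_add_eq_zero_left hRK]
  norm_cast
  simp only [Polynomial.eval_mul, Polynomial.eval_C, Polynomial.eval_neg]
  field_simp
  ring

end
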